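/- For every γ ∈ ℂ, the algebra 𝔑₂(γ) degenerates to 𝔑₂(1): the structure λ with table e₁e₁ = e₃, e₁e₂ = e₄, e₂e₁ = −e₃, e₂e₂ = −e₄ lies in the closure of the GL(V)-orbit of the structure μ_γ with table e₁e₁ = e₃, e₁e₂ = e₄, e₂e₁ = −γe₃, e₂e₂ = −e₄. -/

import Mathlib

noncomputable section

/-- `V = ℂ⁴`. -/
abbrev V : Type := Fin 4 → ℂ

/-- The standard basis vectors `e₁, e₂, e₃, e₄` of `V` (indexed by `0, 1, 2, 3`). -/
def e (i : Fin 4) : V := Pi.single i 1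

/-- The `GL(V)`-orbit `O(μ)` of an algebra structure `μ` on `V`, for the action
`(g • μ)(x, y) = g (μ (g⁻¹ x) (g⁻¹ y))`. -/
def orbit (μ : V →L[ℂ] V →L[ℂ] V) : Set (V →L[ℂ] V →L[ℂ] V) :=
  {ν | ∃ g : V ≃L[ℂ] V, ∀ x y : V, ν x y = g (μ (g.symm x) (g.symm y))}

lemma tendsto_line {E : Type*} [AddCommGroup E] [Module ℂ E] [TopologicalSpace E]
    [ContinuousAdd E] [ContinuousSMul ℂ E] (a b : E) :
    Filter.Tendsto (fun t : ℂ => a + t • b) (nhdsWithin 0 {0}ᶜ) (nhds a) := by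
  have hc : Continuous (fun t : ℂ => a + t • b) := by fun_prop
  have := hc.tendsto 0
  simp only [zero_smul, add_zero] at this
  exact this.mono_left nhdsWithin_le_nhds

lemma V_decomp (x : V) : x = x 0 • e 0 + x 1 • e 1 + x 2 • e 2 + x 3 • e 3 := by
  ext i; fin_cases i <;> simp [e]

lemma mul_formula (c : ℂ) (μ : V →L[ℂ] V →L[ℂ] V)
    (hμ : ∀ i j : Fin 4, μ (e i) (e j) =
    (![
      ![e 2, e 3, 0, 0],
      ![(-c) • e 2, -e 3, 0, 0],
      ![0, 0, 0, 0],
      ![0, 0, 0, 0]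
     ] : Fin 4 → Fin 4 → V) i j) (x y : V) :
    μ x y = ((x 0 - c * x 1) * y 0) • e 2 + ((x 0 - x 1) * y 1) • e 3 := by
  conv_lhs => rw [V_decomp x, V_decomp y]
  simp only [map_add, map_smul, ContinuousLinearMap.add_apply, ContinuousLinearMap.smul_apply, hμ]
  ext i; fin_cases i <;> simp [e] <;> ring

/-- The linear map sending the standard basis to the moving basis. -/
def hfwd (t : ℂ) : V →ₗ[ℂ] V where
  toFun x := ![x 0 - x 1, t * x 1, x 2 - x 3, t * x 3]
  map_add' x y := by ext i; fin_cases i <;> simp <;> ring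
  map_smul' c x := by ext i; fin_cases i <;> simp <;> ring

/-- Its inverse. -/
def hbwd (t : ℂ) : V →ₗ[ℂ] V where
  toFun x := ![x 0 + t⁻¹ * x 1, t⁻¹ * x 1, x 2 + t⁻¹ * x 3, t⁻¹ * x 3]
  map_add' x y := by ext i; fin_cases i <;> simp <;> ring
  map_smul' c x := by ext i; fin_cases i <;> simp <;> ring

/-- The basis change. -/
def gmap (t : ℂ) (ht : t ≠ 0) : V ≃ₗ[ℂ] V :=
  LinearEquiv.ofLinearMap (hbwd t) (hfwd t)
    (by
      apply LinearMap.ext; intro x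
      ext i; fin_cases i <;> simp [hbwd, hfwd, ht])
    (by
      apply LinearMap.ext; intro x
      ext i; fin_cases i <;> simp [hbwd, hfwd, ht])

/-- The perturbation direction. -/
def kap (γ : ℂ) : V →L[ℂ] V →L[ℂ] V :=
  (ContinuousLinearMap.proj (R := ℂ) (φ := fun _ : Fin 4 => ℂ) 1).smulRight
    ((ContinuousLinearMap.proj (R := ℂ) (φ := fun _ : Fin 4 => ℂ) 0).smulRight ((-γ) • e 2) +
     (ContinuousLinearMap.proj (R := ℂ) (φ := fun _ : Fin 4 => ℂ) 1).smulRight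
       ((γ - 1) • e 2 - e 3))

set_option synthInstance.maxHeartbeats 400000 in
/-- For every γ ∈ ℂ, 𝔑₂(γ) degenerates to 𝔑₂(1). -/
theorem stmt10 (γ : ℂ) (μ lam : V →L[ℂ] V →L[ℂ] V)
    (hμ : ∀ i j : Fin 4, μ (e i) (e j) =
    (![
      ![e 2, e 3, 0, 0],
      ![(-γ) • e 2, -e 3, 0, 0],
      ![0, 0, 0, 0],
      ![0, 0, 0, 0]
     ] : Fin 4 → Fin 4 → V) i j)
    (hlam : ∀ i j : Fin 4, lam (e i) (e j) =
    (![
      ![e 2, e 3, 0, 0],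
      ![-e 2, -e 3, 0, 0],
      ![0, 0, 0, 0],
      ![0, 0, 0, 0]
     ] : Fin 4 → Fin 4 → V) i j) :
    lam ∈ closure (orbit μ) := by
  have hm := mul_formula γ μ hμ
  have hl := mul_formula 1 lam (by simpa using hlam)
  have hT : Filter.Tendsto (fun t : ℂ => lam + t • kap γ) (nhdsWithin 0 {0}ᶜ) (nhds lam) := by
    exact tendsto_line lam (kap γ)
  refine mem_closure_of_tendsto hT ?_
  filter_upwards [self_mem_nhdsWithin] with t ht
  have ht : t ≠ 0 := ht
  refine ⟨(gmap t ht).toContinuousLinearEquiv, fun x y => ?_⟩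
  have h1 : ∀ z, (gmap t ht).toContinuousLinearEquiv z = hbwd t z := fun z => rfl
  have h2 : ∀ z, (gmap t ht).toContinuousLinearEquiv.symm z = hfwd t z := fun z => rfl
  rw [h1, h2, h2, hm]
  simp only [ContinuousLinearMap.add_apply, ContinuousLinearMap.smul_apply, hl]
  ext i; fin_cases i <;> simp [e, kap, hbwd, hfwd] <;> field_simp <;> ring
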